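/- arXiv:1804.01785 — 2 statements merged into one kernel-verified Lean document; each statement's English description precedes it below -/
import Mathlib

section
/- Let V be a nonempty finite set and f : 2^V → ℝ a normalized submodular set function. If P is a decomposer of the game (V, f) (a partition of V with f(V) = ∑_{C∈P} f(C)), then for every block C ∈ P and every player i ∈ C, the i-th coordinate of the Shapley value of the game (V, f) equals the i-th coordinate of the Shapley value of the subgame (C, f), i.e. ∑_{D ⊆ V∖{i}} (|D|! (|V|−|D|−1)! / |V|!) (f(D ∪ {i}) − f(D)) = ∑_{D ⊆ C∖{i}} (|D|! (|C|−|D|−1)! / |C|!) (f(D ∪ {i}) − f(D)). -/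
open Finset

/-!
Submodularity bounds `f` of a union of disjoint blocks by the sum of the values of `f`, so a
decomposer may be coarsened to the pair of one block `C` and its complement. Submodularity then
forces `f D = f (D ∩ C) + f (D \ C)` for every coalition `D`, and the marginal contribution of a
player of `C` to `D` depends only on `D ∩ C`. The Shapley weights of the coalitions `D` with a given
trace on `C` add up to the Shapley weight of that trace in the subgame on `C`; by induction on the
number of players outside `C` this is the Pascal-type rule `shapleyWeight_add_shapleyWeight_succ`.
-/

section Submodular

/-- Submodularity of a function on a lattice. A set function is the case of the lattice
`Finset α`, whose meet and join are intersection and union. -/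
def Submodular {β M : Type*} [Lattice β] [Add M] [LE M] (f : β → M) : Prop :=
  ∀ x y, f (x ⊓ y) + f (x ⊔ y) ≤ f x + f y

/-- A decomposer of a game `(N, f)`: a finite set of independent blocks with join `N` whose values
under `f` add up to the value of `N`. The ground set `N` is not a parameter, being determined by
the blocks, and the bottom element is allowed as a block. -/
structure IsDecomposer {β M : Type*} [Lattice β] [OrderBot β] [AddCommMonoid M]
    (f : β → M) (P : Finset β) : Prop where
  supIndep : P.SupIndep id
  apply_sup : f (P.sup id) = ∑ c ∈ P, f c

theorem Submodular.apply_sup_le_sum {ι β M : Type*} [Lattice β] [OrderBot β] [AddCommMonoid M]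
    [Preorder M] [IsOrderedAddMonoid M] {f : β → M} (hf : Submodular f) (hbot : f ⊥ = 0)
    {s : Finset ι} {b : ι → β} (hs : s.SupIndep b) : f (s.sup b) ≤ ∑ i ∈ s, f (b i) := by
  induction s using Finset.cons_induction with
  | empty => simp [hbot]
  | cons i s hi ih =>
    have hdisj : Disjoint (b i) (s.sup b) := hs (subset_cons hi) (mem_cons_self i s) hi
    calc f ((s.cons i hi).sup b)
        = f (b i ⊓ s.sup b) + f (b i ⊔ s.sup b) := by
          rw [hdisj.eq_bot, hbot, zero_add, sup_cons]
      _ ≤ f (b i) + f (s.sup b) := hf _ _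
      _ ≤ f (b i) + ∑ j ∈ s, f (b j) := by gcongr; exact ih (hs.subset (subset_cons hi))
      _ = ∑ j ∈ s.cons i hi, f (b j) := by rw [sum_cons]

variable {β M : Type*} [GeneralizedBooleanAlgebra β] [AddCommMonoid M] {f : β → M}

theorem Submodular.apply_add_apply_sdiff_le [Preorder M] [IsOrderedAddMonoid M]
    (hf : Submodular f) (hbot : f ⊥ = 0) {P : Finset β} (hP : IsDecomposer f P) {c : β}
    (hc : c ∈ P) :
    f c + f (P.sup id \ c) ≤ f (P.sup id) := by
  classical
  have hsup : P.sup id = c ⊔ (P.erase c).sup id := by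
    nth_rw 1 [← insert_erase hc]
    exact sup_insert
  have hdisj : Disjoint c ((P.erase c).sup id) :=
    hP.supIndep (erase_subset c P) hc (notMem_erase c P)
  have hsdiff : P.sup id \ c = (P.erase c).sup id := by
    rw [hsup, hdisj.sup_sdiff_cancel_left]
  calc f c + f (P.sup id \ c)
      ≤ f c + ∑ d ∈ P.erase c, f d := by
        rw [hsdiff]
        gcongr
        exact hf.apply_sup_le_sum hbot (hP.supIndep.subset (erase_subset c P))
    _ = f (P.sup id) := by rw [add_sum_erase P f hc, hP.apply_sup]

theorem Submodular.apply_eq_inf_add_sdiff [PartialOrder M] [IsOrderedCancelAddMonoid M]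
    (hf : Submodular f) (hbot : f ⊥ = 0) {c d n : β} (hcn : c ≤ n)
    (hsplit : f c + f (n \ c) ≤ f n) (hdn : d ≤ n) : f d = f (d ⊓ c) + f (d \ c) := by
  have hinf : (d ⊔ c) ⊓ (n \ c) = d \ c := by
    rw [← inf_sdiff_assoc, inf_eq_left.2 (sup_le hdn hcn), sup_sdiff_right_self]
  have hsup : (d ⊔ c) ⊔ (n \ c) = n := by
    rw [sup_assoc, sup_sdiff_cancel_right hcn, sup_eq_right.2 hdn]
  have hd : f (d \ c) + f n ≤ f (d ⊔ c) + f (n \ c) := by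
    simpa only [hinf, hsup] using hf (d ⊔ c) (n \ c)
  apply le_antisymm
  · simpa only [inf_inf_sdiff, sup_inf_sdiff, hbot, zero_add] using hf (d ⊓ c) (d \ c)
  · refine le_of_add_le_add_right (a := f (d ⊔ c) + f n) ?_
    calc f (d ⊓ c) + f (d \ c) + (f (d ⊔ c) + f n)
        = (f (d ⊓ c) + f (d ⊔ c)) + (f (d \ c) + f n) := add_add_add_comm ..
      _ ≤ (f d + f c) + (f (d ⊔ c) + f (n \ c)) := add_le_add (hf d c) hd
      _ = f d + f (d ⊔ c) + (f c + f (n \ c)) := add_add_add_comm ..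
      _ ≤ f d + f (d ⊔ c) + f n := by gcongr
      _ = f d + (f (d ⊔ c) + f n) := add_assoc ..

end Submodular

section Shapley

/-- The weight in the Shapley value of an `n`-player game of a coalition of `k` players. It is
meaningful for `k < n` only, because of the truncated subtraction. -/
def shapleyWeight (K : Type*) [DivisionSemiring K] (n k : ℕ) : K :=
  k.factorial * (n - k - 1).factorial / n.factorial

/-- The Shapley value of player `i` in the subgame of `f` on the coalition `S`. -/
def shapleyValue (K : Type*) {α M : Type*} [DecidableEq α] [DivisionSemiring K] [AddCommGroup M]
    [Module K M] (f : Finset α → M) (S : Finset α) (i : α) : M :=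
  ∑ D ∈ (S.erase i).powerset, shapleyWeight K #S #D • (f (insert i D) - f D)

theorem shapleyWeight_add_shapleyWeight_succ (K : Type*) [Semifield K] [CharZero K] {n k : ℕ}
    (h : k < n) :
    shapleyWeight K (n + 1) k + shapleyWeight K (n + 1) (k + 1) = shapleyWeight K n k := by
  obtain ⟨m, rfl⟩ := Nat.exists_eq_add_of_lt h
  have hsucc : (k + m + 1 + 1 : K) ≠ 0 := by exact_mod_cast (k + m + 1).succ_ne_zero
  have hfact : ((k + m + 1).factorial : K) ≠ 0 := by
    exact_mod_cast (k + m + 1).factorial_ne_zero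
  simp only [shapleyWeight, (by omega : k + m + 1 + 1 - k - 1 = m + 1),
    (by omega : k + m + 1 + 1 - (k + 1) - 1 = m), (by omega : k + m + 1 - k - 1 = m),
    Nat.factorial_succ (k + m + 1), Nat.factorial_succ m, Nat.factorial_succ k]
  push_cast
  field_simp
  ring

variable {α M : Type*} [DecidableEq α]

theorem sum_shapleyWeight_smul_inter (K : Type*) [Semifield K] [CharZero K] [AddCommMonoid M]
    [Module K M] (g : Finset α → M) {S T : Finset α} (hST : Disjoint S T) :
    ∑ D ∈ (S ∪ T).powerset, shapleyWeight K (#(S ∪ T) + 1) #D • g (D ∩ S) =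
      ∑ D ∈ S.powerset, shapleyWeight K (#S + 1) #D • g D := by
  induction T using Finset.induction_on with
  | empty =>
    rw [union_empty]
    exact sum_congr rfl fun D hD => by rw [inter_eq_left.2 (mem_powerset.1 hD)]
  | insert j T hjT ih =>
    obtain ⟨hjS, hST⟩ := disjoint_insert_right.1 hST
    have hj : j ∉ S ∪ T := notMem_union.2 ⟨hjS, hjT⟩
    rw [union_insert, sum_powerset_insert hj, ← sum_add_distrib, card_insert_of_notMem hj,
      ← ih hST]
    refine sum_congr rfl fun D hD => ?_
    have hDU : D ⊆ S ∪ T := mem_powerset.1 hD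
    rw [card_insert_of_notMem (notMem_mono hDU hj), insert_inter_of_notMem hjS, ← add_smul,
      shapleyWeight_add_shapleyWeight_succ K (Nat.lt_succ_of_le (card_le_card hDU))]

theorem apply_insert_sub_apply_eq_inter [AddCommGroup M] {f : Finset α → M} {C N : Finset α}
    (hf : ∀ D ⊆ N, f D = f (D ∩ C) + f (D \ C)) (hCN : C ⊆ N) {i : α} (hi : i ∈ C)
    {D : Finset α} (hD : D ⊆ N) :
    f (insert i D) - f D = f (insert i (D ∩ C)) - f (D ∩ C) := by
  rw [hf (insert i D) (insert_subset (hCN hi) hD), hf D hD, insert_inter_of_mem hi,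
    insert_sdiff_of_mem _ hi, add_sub_add_right_eq_sub]

theorem shapleyValue_eq_of_apply_eq_inter_add_sdiff (K : Type*) [Semifield K] [CharZero K]
    [AddCommGroup M] [Module K M] {f : Finset α → M} {C N : Finset α}
    (hf : ∀ D ⊆ N, f D = f (D ∩ C) + f (D \ C)) (hCN : C ⊆ N) {i : α} (hi : i ∈ C) :
    shapleyValue K f N i = shapleyValue K f C i := by
  have hunion : C.erase i ∪ N \ C = N.erase i := by
    rw [← erase_eq_of_notMem (notMem_sdiff_of_mem_right hi : i ∉ N \ C), ← erase_union_distrib,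
      union_sdiff_of_subset hCN]
  have hmarginal : ∀ D ⊆ N.erase i,
      f (insert i D) - f D = f (insert i (D ∩ C.erase i)) - f (D ∩ C.erase i) := by
    intro D hD
    have hiD : i ∉ D := fun h => notMem_erase i N (hD h)
    rw [apply_insert_sub_apply_eq_inter hf hCN hi (hD.trans (erase_subset i N)), inter_erase,
      erase_eq_of_notMem (mt mem_of_mem_inter_left hiD)]
  have hsum := sum_shapleyWeight_smul_inter K (fun D => f (insert i D) - f D)
    (disjoint_sdiff.mono_left (erase_subset i C) : Disjoint (C.erase i) (N \ C))
  rw [hunion, card_erase_add_one (hCN hi), card_erase_add_one hi] at hsum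
  rw [shapleyValue, shapleyValue, ← hsum]
  exact sum_congr rfl fun D hD => by rw [hmarginal D (mem_powerset.1 hD)]

end Shapley

theorem shapley_decomposition_general (K : Type*) {α M : Type*} [DecidableEq α] [Semifield K]
    [CharZero K] [AddCommGroup M] [PartialOrder M] [IsOrderedAddMonoid M] [Module K M]
    {f : Finset α → M} (hnorm : f ∅ = 0) (hsub : Submodular f) {P : Finset (Finset α)}
    (hP : IsDecomposer f P) {C : Finset α} (hC : C ∈ P) {i : α} (hi : i ∈ C) :
    shapleyValue K f (P.sup id) i = shapleyValue K f C i := by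
  have hCN : C ⊆ P.sup id := le_sup (f := id) hC
  have hsplit : f C + f (P.sup id \ C) ≤ f (P.sup id) :=
    hsub.apply_add_apply_sdiff_le hnorm hP hC
  exact shapleyValue_eq_of_apply_eq_inter_add_sdiff K
    (fun D hD => hsub.apply_eq_inf_add_sdiff hnorm hCN hsplit hD) hCN hi

/-- Decomposition of the Shapley value: for a normalized submodular game `(V, f)`
with decomposer `P` (a partition of `V` with `f(V) = ∑_{C ∈ P} f(C)`), the Shapley
value coordinate of each player `i` in a block `C` computed in the whole game equals
the one computed in the subgame on `C`. -/
theorem shapley_decomposition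
    {V : Type*} [Fintype V] [DecidableEq V] [Nonempty V]
    (f : Finset V → ℝ)
    (hnorm : f ∅ = 0)
    (hsub : ∀ X Y : Finset V, f (X ∩ Y) + f (X ∪ Y) ≤ f X + f Y)
    (P : Finset (Finset V))
    (hne : ∀ C ∈ P, C.Nonempty)
    (hdisj : ∀ C ∈ P, ∀ D ∈ P, C ≠ D → Disjoint C D)
    (hcover : P.sup id = Finset.univ)
    (hdec : f Finset.univ = ∑ C ∈ P, f C) :
    ∀ C ∈ P, ∀ i ∈ C,
      ∑ D ∈ (Finset.univ.erase i).powerset,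
        ((D.card.factorial * (Fintype.card V - D.card - 1).factorial : ℝ) /
            (Fintype.card V).factorial) * (f (insert i D) - f D)
      = ∑ D ∈ (C.erase i).powerset,
          ((D.card.factorial * (C.card - D.card - 1).factorial : ℝ) /
              C.card.factorial) * (f (insert i D) - f D) := by
  intro C hC i hi
  have hP : IsDecomposer f P := ⟨supIndep_iff_pairwiseDisjoint.2 hdisj, by rw [hcover, hdec]⟩
  have h := shapley_decomposition_general ℝ hnorm hsub hP hC hi
  rwa [hcover] at h
end

section
/- Let V be a nonempty finite set, f : 2^V → ℝ a normalized monotone submodular set function, and P a decomposer of the game (V, f) (a partition of V with f(V) = ∑_{C∈P} f(C)). Then a vector r ∈ ℝ^V belongs to the core B(f) = { r : r(X) ≤ f(X) for all X ⊆ V, r(V) = f(V) } if and only if for every block C ∈ P the restriction of r to C satisfies r(Y) ≤ f(Y) for all Y ⊆ C and r(C) = f(C); that is, B(f) is the direct sum ⊕_{C∈P} B(f|_C) of the cores of the subgames. -/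
open Finset

/-!
For pairwise disjoint blocks `C₁, …, Cₖ`, put `Aⱼ = X ∪ C₁ ∪ ⋯ ∪ Cⱼ`. Disjointness gives
`Aⱼ₋₁ ∩ Cⱼ = X ∩ Cⱼ`, so submodularity at `Aⱼ₋₁, Cⱼ` reads
`f (X ∩ Cⱼ) + f Aⱼ ≤ f Aⱼ₋₁ + f Cⱼ`. Summing over `j` telescopes; if the blocks decompose the
game, what remains is `∑ f (X ∩ Cⱼ) ≤ f X`, so bounds for `r` inside the blocks add up to a bound
on `X`. Conversely, `r(Cⱼ) ≤ f(Cⱼ)` holds on the core, and since both sides have the same total,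
each of these inequalities is an equality.
-/

/-- Submodularity of a function on a lattice; on `Finset V` it is submodularity of a set
function. -/
def IsSubmodular {α M : Type*} [Lattice α] [Add M] [LE M] (f : α → M) : Prop :=
  ∀ x y, f (x ⊓ y) + f (x ⊔ y) ≤ f x + f y

/-- The core (base polyhedron) of the subgame of `f` on the coalition `U`. Its members are vectors
on all of `V`, of which only the coordinates in `U` matter. -/
def core {V M : Type*} [AddCommMonoid M] [LE M] (f : Finset V → M) (U : Finset V) : Set (V → M) :=
  {r | (∀ X ⊆ U, ∑ i ∈ X, r i ≤ f X) ∧ ∑ i ∈ U, r i = f U}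

namespace IsSubmodular

variable {α ι M : Type*} [DistribLattice α] [OrderBot α] [AddCommMonoid M] [PartialOrder M]
  {f : α → M} {s : Finset ι} {t : ι → α}

theorem sum_inf_add_sup_le [IsOrderedAddMonoid M] (hf : IsSubmodular f)
    (ht : (s : Set ι).PairwiseDisjoint t) (x : α) :
    ∑ j ∈ s, f (x ⊓ t j) + f (x ⊔ s.sup t) ≤ f x + ∑ j ∈ s, f (t j) := by
  induction s using Finset.cons_induction with
  | empty => simp
  | cons k s hk ih =>
    rw [coe_cons, Set.pairwiseDisjoint_insert_of_notMem (mod_cast hk)] at ht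
    have hdisj : Disjoint (s.sup t) (t k) :=
      Finset.disjoint_sup_left.mpr fun j hj => (ht.2 j hj).symm
    have hinf : (x ⊔ s.sup t) ⊓ t k = x ⊓ t k := by
      rw [inf_sup_right, hdisj.eq_bot, sup_bot_eq]
    have hsup : (x ⊔ s.sup t) ⊔ t k = x ⊔ (cons k s hk).sup t := by
      rw [sup_cons, sup_assoc, sup_comm (t k)]
    have hstep : f (x ⊓ t k) + f (x ⊔ (cons k s hk).sup t) ≤ f (x ⊔ s.sup t) + f (t k) := by
      simpa only [hinf, hsup] using hf (x ⊔ s.sup t) (t k)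
    calc ∑ j ∈ cons k s hk, f (x ⊓ t j) + f (x ⊔ (cons k s hk).sup t)
        = ∑ j ∈ s, f (x ⊓ t j) + (f (x ⊓ t k) + f (x ⊔ (cons k s hk).sup t)) := by
          rw [sum_cons, add_comm (f _), add_assoc]
      _ ≤ ∑ j ∈ s, f (x ⊓ t j) + (f (x ⊔ s.sup t) + f (t k)) := by gcongr
      _ = (∑ j ∈ s, f (x ⊓ t j) + f (x ⊔ s.sup t)) + f (t k) := (add_assoc ..).symm
      _ ≤ (f x + ∑ j ∈ s, f (t j)) + f (t k) := add_le_add (ih ht.1) le_rfl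
      _ = f x + ∑ j ∈ cons k s hk, f (t j) := by
          rw [sum_cons, add_assoc, add_comm (f (t k))]

theorem sum_inf_le_of_apply_sup_eq_sum [IsOrderedCancelAddMonoid M] (hf : IsSubmodular f)
    (ht : (s : Set ι).PairwiseDisjoint t) (hdec : f (s.sup t) = ∑ j ∈ s, f (t j))
    {x : α} (hx : x ≤ s.sup t) :
    ∑ j ∈ s, f (x ⊓ t j) ≤ f x := by
  have h := hf.sum_inf_add_sup_le ht x
  rw [sup_eq_right.mpr hx, hdec] at h
  exact le_of_add_le_add_right h

end IsSubmodular

section Core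

variable {V ι M : Type*} [DecidableEq V] [AddCommMonoid M] {s : Finset ι} {t : ι → Finset V}

theorem sum_eq_sum_sum_inter_of_subset_sup (ht : (s : Set ι).PairwiseDisjoint t) (r : V → M)
    {X : Finset V} (hX : X ⊆ s.sup t) :
    ∑ i ∈ X, r i = ∑ j ∈ s, ∑ i ∈ X ∩ t j, r i := by
  rw [← sum_biUnion (ht.mono fun _ => inter_subset_right), ← inter_biUnion, ← sup_eq_biUnion,
    inter_eq_left.mpr hX]

theorem sum_sup_eq_sum_sum (ht : (s : Set ι).PairwiseDisjoint t) (r : V → M) :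
    ∑ i ∈ s.sup t, r i = ∑ j ∈ s, ∑ i ∈ t j, r i := by
  rw [sup_eq_biUnion, sum_biUnion ht]

variable [PartialOrder M] [IsOrderedCancelAddMonoid M] {f : Finset V → M} {r : V → M}

theorem mem_core_of_mem_core_sup (ht : (s : Set ι).PairwiseDisjoint t)
    (hdec : f (s.sup t) = ∑ j ∈ s, f (t j)) (hr : r ∈ core f (s.sup t)) {j : ι} (hj : j ∈ s) :
    r ∈ core f (t j) := by
  obtain ⟨hle, htotal⟩ := hr
  have hblock_le : ∀ k ∈ s, ∑ i ∈ t k, r i ≤ f (t k) := fun k hk => hle _ (le_sup hk)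
  have hsum : ∑ k ∈ s, ∑ i ∈ t k, r i = ∑ k ∈ s, f (t k) := by
    rw [← sum_sup_eq_sum_sum ht, htotal, hdec]
  exact ⟨fun Y hY => hle Y (hY.trans (le_sup hj)),
    (sum_eq_sum_iff_of_le hblock_le).mp hsum j hj⟩

theorem mem_core_sup_of_forall_mem_core (hf : IsSubmodular f)
    (ht : (s : Set ι).PairwiseDisjoint t) (hdec : f (s.sup t) = ∑ j ∈ s, f (t j))
    (hr : ∀ j ∈ s, r ∈ core f (t j)) :
    r ∈ core f (s.sup t) := by
  refine ⟨fun X hX => ?_, ?_⟩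
  · calc ∑ i ∈ X, r i = ∑ j ∈ s, ∑ i ∈ X ∩ t j, r i :=
          sum_eq_sum_sum_inter_of_subset_sup ht r hX
      _ ≤ ∑ j ∈ s, f (X ∩ t j) := sum_le_sum fun j hj => (hr j hj).1 _ inter_subset_right
      _ ≤ f X := hf.sum_inf_le_of_apply_sup_eq_sum ht hdec hX
  · rw [sum_sup_eq_sum_sum ht, hdec]
    exact sum_congr rfl fun j hj => (hr j hj).2

theorem core_decomposition_general (hf : IsSubmodular f) (ht : (s : Set ι).PairwiseDisjoint t)
    {U : Finset V} (hcover : s.sup t = U) (hdec : f U = ∑ j ∈ s, f (t j)) (r : V → M) :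
    r ∈ core f U ↔ ∀ j ∈ s, r ∈ core f (t j) := by
  subst hcover
  exact ⟨fun hr _ => mem_core_of_mem_core_sup ht hdec hr,
    mem_core_sup_of_forall_mem_core hf ht hdec⟩

end Core

/-- Decomposition of the core: for a normalized monotone submodular game `(V, f)`
with decomposer `P`, a vector `r` lies in the core `B(f)` iff, for every block
`C ∈ P`, the restriction of `r` to `C` lies in the core of the subgame `(C, f)`. -/
theorem core_decomposition
    {V : Type*} [Fintype V] [DecidableEq V] [Nonempty V]
    (f : Finset V → ℝ)
    (hnorm : f ∅ = 0)
    (hmono : ∀ X Y : Finset V, Y ⊆ X → f Y ≤ f X)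
    (hsub : ∀ X Y : Finset V, f (X ∩ Y) + f (X ∪ Y) ≤ f X + f Y)
    (P : Finset (Finset V))
    (hne : ∀ C ∈ P, C.Nonempty)
    (hdisj : ∀ C ∈ P, ∀ D ∈ P, C ≠ D → Disjoint C D)
    (hcover : P.sup id = Finset.univ)
    (hdec : f Finset.univ = ∑ C ∈ P, f C) :
    ∀ r : V → ℝ,
      ((∀ X : Finset V, ∑ i ∈ X, r i ≤ f X) ∧ ∑ i, r i = f Finset.univ)
      ↔ (∀ C ∈ P, (∀ Y ⊆ C, ∑ i ∈ Y, r i ≤ f Y) ∧ ∑ i ∈ C, r i = f C) := by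
  intro r
  simpa [core] using core_decomposition_general hsub hdisj hcover hdec r
end
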